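/- (Corollary used in the paper: with λ1 = S_U − S_L, the equivalence holds for any λ2 ≥ 0.) Let d : ℕ and let S be a score function on binary adjacency matrices of size d with minimum value S* over acyclic binary adjacency matrices. Assume S_L ≤ S(A) for every binary adjacency matrix A, S* ≤ S_U, λ2 ≥ 0, and λ1 ≥ S_U − S_L with λ1 ≥ 0. Then every acyclic binary adjacency matrix A₀ with S(A₀) = S* minimizes the penalized objective F over all binary adjacency matrices, and the minimum of F over all binary adjacency matrices equals S*. -/

import Mathlib

/-- A binary adjacency matrix: every entry is 0 or 1. -/
def IsBinary {d : ℕ} (A : Matrix (Fin d) (Fin d) ℝ) : Prop :=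
  ∀ i j, A i j = 0 ∨ A i j = 1

/-- The directed graph induced by `A` (edge `i → j` iff `A i j = 1`) is acyclic. -/
def IsAcyclicMat {d : ℕ} (A : Matrix (Fin d) (Fin d) ℝ) : Prop :=
  Irreflexive (Relation.TransGen (fun i j => A i j = 1))

/-- The smooth acyclicity function `h(A) = trace (exp A) - d`. -/
noncomputable def hAcyc {d : ℕ} (A : Matrix (Fin d) (Fin d) ℝ) : ℝ :=
  Matrix.trace (NormedSpace.exp A) - d

open Classical in
/-- The penalized objective `F(A) = S(A) + λ₁·1[A ∉ DAGs] + λ₂·h(A)`. -/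
noncomputable def penObj {d : ℕ} (S : Matrix (Fin d) (Fin d) ℝ → ℝ) (lam1 lam2 : ℝ)
    (A : Matrix (Fin d) (Fin d) ℝ) : ℝ :=
  S A + lam1 * (if IsAcyclicMat A then (0 : ℝ) else 1) + lam2 * hAcyc A

open scoped Matrix.Norms.Operator in
theorem hAcyc_hasSum {d : ℕ} (A : Matrix (Fin d) (Fin d) ℝ) :
    HasSum (fun k : ℕ => ((k.factorial : ℝ)⁻¹) * Matrix.trace (A ^ k))
      (Matrix.trace (NormedSpace.exp A)) := by
  have h := NormedSpace.exp_series_hasSum_exp' (𝕂 := ℝ) A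
  have h2 := h.map (Matrix.traceAddMonoidHom (Fin d) ℝ)
    (by exact Continuous.matrix_trace continuous_id)
  convert h2 using 1
  · funext k
    simp [Matrix.trace_smul]
  · rfl

theorem pow_entry_nonneg {d : ℕ} {A : Matrix (Fin d) (Fin d) ℝ} (hA : IsBinary A) (k : ℕ) :
    ∀ i j, 0 ≤ (A ^ k) i j := by
  induction k with
  | zero =>
    intro i j
    rw [pow_zero, Matrix.one_apply]
    split_ifs <;> norm_num
  | succ k ih =>
    intro i j
    rw [pow_succ, Matrix.mul_apply]
    refine Finset.sum_nonneg fun l _ => mul_nonneg (ih i l) ?_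
    rcases hA l j with h | h <;> rw [h] <;> norm_num

theorem pow_entry_path {d : ℕ} {A : Matrix (Fin d) (Fin d) ℝ} (hA : IsBinary A) (k : ℕ) :
    ∀ i j, (A ^ (k + 1)) i j ≠ 0 → Relation.TransGen (fun i j => A i j = 1) i j := by
  induction k with
  | zero =>
    intro i j h
    rw [zero_add, pow_one] at h
    exact Relation.TransGen.single ((hA i j).resolve_left h)
  | succ k ih =>
    intro i j h
    rw [pow_succ, Matrix.mul_apply] at h
    obtain ⟨l, _, hl⟩ := Finset.exists_ne_zero_of_sum_ne_zero h
    exact Relation.TransGen.tail (ih i l (left_ne_zero_of_mul hl))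
      ((hA l j).resolve_left (right_ne_zero_of_mul hl))

theorem hAcyc_nonneg {d : ℕ} {A : Matrix (Fin d) (Fin d) ℝ} (hA : IsBinary A) :
    0 ≤ hAcyc A := by
  have h := le_hasSum (hAcyc_hasSum A) 0 (fun k _ => mul_nonneg (by positivity)
    (Finset.sum_nonneg fun i _ => pow_entry_nonneg hA k i i))
  simp at h
  simpa [hAcyc] using h

theorem hAcyc_eq_zero {d : ℕ} {A : Matrix (Fin d) (Fin d) ℝ} (hA : IsBinary A)
    (hac : IsAcyclicMat A) : hAcyc A = 0 := by
  have h2 := hasSum_single (f := fun k : ℕ => ((k.factorial : ℝ)⁻¹) * Matrix.trace (A ^ k)) 0 (by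
    intro k hk
    obtain ⟨m, rfl⟩ := Nat.exists_eq_succ_of_ne_zero hk
    have : Matrix.trace (A ^ (m + 1)) = 0 := by
      refine Finset.sum_eq_zero fun i _ => ?_
      by_contra hne
      have hp := pow_entry_path hA m i i hne
      exact hac i hp
    simp [this])
  have h3 := (hAcyc_hasSum A).unique h2
  simp only [hAcyc, h3]
  simp

theorem prop1_corollary (d : ℕ) (S : Matrix (Fin d) (Fin d) ℝ → ℝ)
    (Sstar SL SU lam1 lam2 : ℝ)
    (hSstar : IsLeast {s : ℝ | ∃ A : Matrix (Fin d) (Fin d) ℝ,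
        IsBinary A ∧ IsAcyclicMat A ∧ S A = s} Sstar)
    (hSL : ∀ A : Matrix (Fin d) (Fin d) ℝ, IsBinary A → SL ≤ S A)
    (hSU : Sstar ≤ SU)
    (hl2 : 0 ≤ lam2)
    (hl1 : 0 ≤ lam1)
    (hl1' : SU - SL ≤ lam1) :
    (∀ A₀ : Matrix (Fin d) (Fin d) ℝ, IsBinary A₀ → IsAcyclicMat A₀ → S A₀ = Sstar →
      ∀ A : Matrix (Fin d) (Fin d) ℝ, IsBinary A →
        penObj S lam1 lam2 A₀ ≤ penObj S lam1 lam2 A) ∧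
    IsLeast {v : ℝ | ∃ A : Matrix (Fin d) (Fin d) ℝ,
        IsBinary A ∧ penObj S lam1 lam2 A = v} Sstar := by
  have hF0 : ∀ A : Matrix (Fin d) (Fin d) ℝ, IsBinary A → IsAcyclicMat A →
      penObj S lam1 lam2 A = S A := by
    intro A hA hac
    simp [penObj, hac, hAcyc_eq_zero hA hac]
  have hF : ∀ A : Matrix (Fin d) (Fin d) ℝ, IsBinary A → Sstar ≤ penObj S lam1 lam2 A := by
    intro A hA
    by_cases hac : IsAcyclicMat A
    · rw [hF0 A hA hac]
      exact hSstar.2 ⟨A, hA, hac, rfl⟩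
    · have h1 := mul_nonneg hl2 (hAcyc_nonneg hA)
      have h2 := hSL A hA
      simp only [penObj, hac, if_false]
      linarith
  refine ⟨fun A₀ h0 hac hS A hA => ?_, ?_, ?_⟩
  · rw [hF0 A₀ h0 hac, hS]
    exact hF A hA
  · obtain ⟨A, hA, hac, hS⟩ := hSstar.1
    exact ⟨A, hA, by rw [hF0 A hA hac, hS]⟩
  · rintro v ⟨A, hA, rfl⟩
    exact hF A hA
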